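/- arXiv:2605.20974 — 4 statements merged into one kernel-verified Lean document; each statement's English description precedes it below -/
import Mathlib

section
/- Let M be a cancellative commutative monoid. Then every submonoid of M is an FFM if and only if every undermonoid of M is an FFM. (Main theorem: finite factorization is detected by undermonoids.) -/
/-- The set of factorizations of `b` in the submonoid `S`: multisets of irreducible
elements of `Associates ↥S` whose product is the class of `b`. -/
def ZSet {M : Type*} [CancelCommMonoid M] (S : Submonoid M) (b : S) :
    Set (Multiset (Associates S)) :=
  {z | (∀ a ∈ z, Irreducible a) ∧ z.prod = Associates.mk b}

/-- A submonoid `S` is a finite factorization monoid (FFM) if every element has a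
nonempty finite set of factorizations. -/
def IsFFM {M : Type*} [CancelCommMonoid M] (S : Submonoid M) : Prop :=
  ∀ b : S, (ZSet S b).Nonempty ∧ (ZSet S b).Finite

/-- A submonoid `N` of `M` is an undermonoid if it generates the same Grothendieck
group as `M`: every `m ∈ M` satisfies `m * x = y` for some `x, y ∈ N`. -/
def IsUndermonoid {M : Type*} [CancelCommMonoid M] (N : Submonoid M) : Prop :=
  ∀ m : M, ∃ x ∈ N, ∃ y ∈ N, m * x = y

/-!
Fix `b ∈ S`. If a submonoid `N ≥ S` contains no divisors of `b` beyond those already in `S`, then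
`b` has the same factorizations in `S` and in `N`, so it suffices to find such an `N` that is an
undermonoid. When `b` is not a unit, any maximal one works (Zorn). Indeed, maximality forces
`m ∈ N` unless `s * m ^ (k + 1) = b` for some `s ∈ N`. In the exceptional case `m * (s * b) ∈ N`:
its `(k + 1)`-st power is `s ^ k * b ^ (k + 2)`, so if a power of `m * (s * b)` divided `b` over
`N`, then `b ^ (k + 2)` would divide `b ^ (k + 1)` and `b` would be a unit.
-/

section Factorizations

variable {A B : Type*} [CommMonoid A] [CommMonoid B]

/-- The factorizations of `a` into irreducibles, not taken up to associates. Hence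
`ZSet S b` is `factorizations (Associates.mk b)`. -/
def factorizations (a : A) : Set (Multiset A) :=
  {z | (∀ p ∈ z, Irreducible p) ∧ z.prod = a}

theorem factorizations_one : factorizations (1 : A) = {0} := by
  ext z
  constructor
  · rintro ⟨hirr, hprod⟩
    exact Multiset.eq_zero_of_forall_notMem fun p hp =>
      (hirr p hp).not_isUnit (isUnit_of_dvd_one (hprod ▸ Multiset.dvd_prod hp))
  · rintro rfl
    exact ⟨by simp, Multiset.prod_zero⟩

/-- The homomorphism between the quotients by units induced by `f`. -/
def associatesMap (f : A →* B) : Associates A →* Associates B where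
  toFun := Quotient.map f fun _ _ h => h.map f
  map_one' := congrArg Associates.mk (map_one f)
  map_mul' := by
    rintro ⟨x⟩ ⟨y⟩
    exact congrArg Associates.mk (map_mul f x y)

/-- Every divisor of `f a` is in the range of `f`. For injective `f`, this makes the
factorizations of `a` and of `f a` correspond. -/
def LiftsDivisors (f : A →* B) (a : A) : Prop :=
  ∀ x, x ∣ f a → x ∈ Set.range f

namespace LiftsDivisors

variable {f : A →* B} {a : A}

theorem of_dvd {c : A} (h : LiftsDivisors f a) (hc : c ∣ a) : LiftsDivisors f c :=
  fun x hx => h x (hx.trans (map_dvd f hc))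

theorem isLocalHom (h : LiftsDivisors f a) (hf : Function.Injective f) : IsLocalHom f where
  map_nonunit c hc := by
    obtain ⟨v, hv⟩ := isUnit_iff_exists_inv.1 hc
    -- units divide everything, so the inverse of `f c` lifts
    obtain ⟨d, rfl⟩ := h v (IsUnit.of_mul_eq_one (f c) (by rw [mul_comm, hv])).dvd
    exact IsUnit.of_mul_eq_one d (hf (by rw [map_mul, hv, map_one]))

theorem irreducible_map_iff (h : LiftsDivisors f a) (hf : Function.Injective f) :
    Irreducible (f a) ↔ Irreducible a := by
  have := h.isLocalHom hf
  refine ⟨Irreducible.of_map, fun ha => ⟨fun hu => ha.not_isUnit (hu.of_map f a), ?_⟩⟩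
  intro x y hxy
  obtain ⟨x, rfl⟩ := h x (Dvd.intro _ hxy.symm)
  obtain ⟨y, rfl⟩ := h y (Dvd.intro_left _ hxy.symm)
  have ha_eq : a = x * y := hf (by rw [hxy, map_mul])
  exact (ha.isUnit_or_isUnit ha_eq).imp (IsUnit.map f) (IsUnit.map f)

theorem image_factorizations (h : LiftsDivisors f a) (hf : Function.Injective f) :
    Multiset.map f '' factorizations a = factorizations (f a) := by
  have irreducible_iff {z : Multiset A} (hz : z.prod = a) {p : A} (hp : p ∈ z) :
      Irreducible (f p) ↔ Irreducible p :=
    (h.of_dvd (hz ▸ Multiset.dvd_prod hp)).irreducible_map_iff hf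
  ext w
  constructor
  · rintro ⟨z, ⟨hirr, hprod⟩, rfl⟩
    refine ⟨fun q hq => ?_, by rw [← map_multiset_prod, hprod]⟩
    obtain ⟨p, hp, rfl⟩ := Multiset.mem_map.1 hq
    exact (irreducible_iff hprod hp).2 (hirr p hp)
  · rintro ⟨hirr, hprod⟩
    have : CanLift B A f (· ∈ Set.range f) := ⟨fun _ hx => hx⟩
    lift w to Multiset A using fun q hq => h q (hprod ▸ Multiset.dvd_prod hq) with z
    have hz : z.prod = a := hf (by rw [map_multiset_prod, hprod])
    exact ⟨z, ⟨fun p hp => (irreducible_iff hz hp).1 (hirr _ (Multiset.mem_map_of_mem f hp)), hz⟩,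
      rfl⟩

theorem associatesMap_injective (h : LiftsDivisors f a) (hf : Function.Injective f) :
    Function.Injective (associatesMap f) := by
  have := h.isLocalHom hf
  refine Associates.forall_associated.2 fun x => Associates.forall_associated.2 fun y hxy => ?_
  obtain ⟨u, hu⟩ := Associates.mk_eq_mk_iff_associated.1 hxy
  obtain ⟨v, hv⟩ := h u u.isUnit.dvd
  have hv_unit : IsUnit v := IsUnit.of_map f v (hv ▸ u.isUnit)
  have hxv : x * v = y := hf (by rw [map_mul, hv, hu])
  exact Associates.mk_eq_mk_iff_associated.2 ⟨hv_unit.unit, hxv⟩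

theorem associatesMap (h : LiftsDivisors f a) :
    LiftsDivisors (associatesMap f) (Associates.mk a) := by
  refine Associates.forall_associated.2 fun x hx => ?_
  obtain ⟨c, rfl⟩ := h x (Associates.mk_dvd_mk.1 hx)
  exact ⟨Associates.mk c, rfl⟩

end LiftsDivisors

end Factorizations

theorem isUnit_of_pow_succ_dvd_pow {A : Type*} [CommMonoid A] [IsLeftCancelMul A] {b : A} {n : ℕ}
    (h : b ^ (n + 1) ∣ b ^ n) : IsUnit b := by
  obtain ⟨c, hc⟩ := h
  rw [pow_succ, mul_assoc, left_eq_mul] at hc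
  exact IsUnit.of_mul_eq_one c hc

section Submonoids

variable {M : Type*}

/-- The submonoid `N` extends `S` without acquiring divisors of `b` outside `S`, so that `S` and
`N` have the same factorizations of `b`. Divisibility is taken in `N`, not in `M`. -/
structure PreservesDivisors [CommMonoid M] (S : Submonoid M) (b : M) (N : Submonoid M) :
    Prop where
  le : S ≤ N
  mem_of_mul_eq : ∀ {x y}, x ∈ N → y ∈ N → x * y = b → x ∈ S

section CommMonoid

variable [CommMonoid M] {S N : Submonoid M}

theorem PreservesDivisors.liftsDivisors_inclusion {b : S} (h : PreservesDivisors S b N) :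
    LiftsDivisors (Submonoid.inclusion h.le) b := by
  rintro x ⟨y, hxy⟩
  exact ⟨⟨x, h.mem_of_mul_eq x.2 y.2 (congrArg Subtype.val hxy.symm)⟩, rfl⟩

theorem exists_maximal_preservesDivisors (S : Submonoid M) (b : M) :
    ∃ N, Maximal (PreservesDivisors S b) N := by
  have refl : PreservesDivisors S b S := ⟨le_rfl, fun hx _ _ => hx⟩
  suffices chain_bounded : ∀ c ⊆ {N | PreservesDivisors S b N}, IsChain (· ≤ ·) c → ∀ N₀ ∈ c,
      ∃ N ∈ {N | PreservesDivisors S b N}, ∀ N' ∈ c, N' ≤ N by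
    obtain ⟨N, -, hN⟩ := zorn_le_nonempty₀ _ chain_bounded S refl
    exact ⟨N, hN⟩
  intro c hc hchain N₀ hN₀
  have hdir : DirectedOn (· ≤ ·) c := hchain.directedOn
  refine ⟨sSup c, ⟨(hc hN₀).le.trans (le_sSup hN₀), fun {x y} hx hy hxy => ?_⟩,
    fun _ => le_sSup⟩
  rw [Submonoid.mem_sSup_of_directedOn ⟨N₀, hN₀⟩ hdir] at hx hy
  obtain ⟨N₁, hN₁, hx⟩ := hx
  obtain ⟨N₂, hN₂, hy⟩ := hy
  obtain ⟨N₃, hN₃, h₁₃, h₂₃⟩ := hdir N₁ hN₁ N₂ hN₂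
  exact (hc hN₃).mem_of_mul_eq (h₁₃ hx) (h₂₃ hy) hxy

theorem PreservesDivisors.sup_powers {b m : M} (h : PreservesDivisors S b N)
    (hm : ∀ s ∈ N, ∀ k : ℕ, s * m ^ (k + 1) ≠ b) :
    PreservesDivisors S b (N ⊔ Submonoid.powers m) := by
  refine ⟨h.le.trans le_sup_left, fun hx hy hxy => ?_⟩
  obtain ⟨s, hs, _, ⟨i, rfl⟩, rfl⟩ := Submonoid.mem_sup.1 hx
  obtain ⟨t, ht, _, ⟨j, rfl⟩, rfl⟩ := Submonoid.mem_sup.1 hy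
  have hst : s * t * m ^ (i + j) = b := by rw [← hxy, pow_add, mul_mul_mul_comm]
  cases hij : i + j with
  | zero =>
    obtain ⟨rfl, rfl⟩ : i = 0 ∧ j = 0 := by omega
    simp only [pow_zero, mul_one] at hxy ⊢
    exact h.mem_of_mul_eq hs ht hxy
  | succ k => exact absurd (hij ▸ hst) (hm _ (N.mul_mem hs ht) k)

theorem mem_of_maximal_preservesDivisors {b m : M} (hN : Maximal (PreservesDivisors S b) N)
    (hm : ∀ s ∈ N, ∀ k : ℕ, s * m ^ (k + 1) ≠ b) : m ∈ N :=
  hN.le_of_ge (hN.prop.sup_powers hm) le_sup_left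
    (Submonoid.mem_sup_right (Submonoid.mem_powers m))

end CommMonoid

variable [CancelCommMonoid M]

theorem isUnit_of_mul_mul_pow_eq {N : Submonoid M} {b s u : N} {m : M} {j k : ℕ}
    (hs : (s : M) * m ^ (k + 1) = b) (hu : (u : M) * (m * (s * b)) ^ (j + 1) = b) :
    IsUnit b := by
  have hpow : (m * (s * b)) ^ (k + 1) = (s ^ k * b ^ (k + 2) : N) := by
    calc (m * (s * b)) ^ (k + 1)
        = s ^ k * b ^ (k + 1) * (s * m ^ (k + 1)) := by
          rw [mul_pow, mul_pow, pow_succ (s : M) k]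
          ac_rfl
      _ = (s ^ k * b ^ (k + 2) : N) := by
          rw [hs, mul_assoc, ← pow_succ]
          norm_cast
  have hprod : u ^ (k + 1) * (s ^ k * b ^ (k + 2)) ^ (j + 1) = b ^ (k + 1) := by
    refine Subtype.ext ?_
    push_cast at hpow ⊢
    rw [← hpow, pow_right_comm, ← mul_pow, hu]
  have hdvd : b ^ (k + 2) ∣ b ^ (k + 1) := calc
    b ^ (k + 2) ∣ s ^ k * b ^ (k + 2) := dvd_mul_left _ _
    _ ∣ (s ^ k * b ^ (k + 2)) ^ (j + 1) := dvd_pow_self _ j.succ_ne_zero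
    _ ∣ b ^ (k + 1) := Dvd.intro_left _ hprod
  exact isUnit_of_pow_succ_dvd_pow hdvd

variable {S N : Submonoid M} {b : S}

theorem isUndermonoid_of_maximal_preservesDivisors (hb : ¬ IsUnit b)
    (hN : Maximal (PreservesDivisors S b) N) : IsUndermonoid N := by
  have hlocal := hN.prop.liftsDivisors_inclusion.isLocalHom (Submonoid.inclusion_injective _)
  let b' : N := Submonoid.inclusion hN.prop.le b
  have hb' : ¬ IsUnit b' := fun hu => hb (hu.of_map _ b)
  intro m
  by_cases hm : ∃ s ∈ N, ∃ k : ℕ, s * m ^ (k + 1) = b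
  · obtain ⟨s, hs, k, hk⟩ := hm
    refine ⟨s * b, N.mul_mem hs b'.2, m * (s * b), ?_, rfl⟩
    refine mem_of_maximal_preservesDivisors hN fun u hu j hj => hb' ?_
    exact isUnit_of_mul_mul_pow_eq (s := ⟨s, hs⟩) (u := ⟨u, hu⟩) hk hj
  · push Not at hm
    exact ⟨1, N.one_mem, m, mem_of_maximal_preservesDivisors hN hm, mul_one m⟩

theorem zSet_eq_singleton_zero_of_isUnit (hb : IsUnit b) : ZSet S b = {0} := by
  rw [← factorizations_one, ← Associates.mk_eq_one.2 hb]
  rfl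

theorem PreservesDivisors.image_zSet (h : PreservesDivisors S b N) :
    Multiset.map (associatesMap (Submonoid.inclusion h.le)) '' ZSet S b =
      ZSet N (Submonoid.inclusion h.le b) :=
  h.liftsDivisors_inclusion.associatesMap.image_factorizations
    (h.liftsDivisors_inclusion.associatesMap_injective (Submonoid.inclusion_injective _))

theorem PreservesDivisors.zSet_nonempty_and_finite (h : PreservesDivisors S b N) (hN : IsFFM N) :
    (ZSet S b).Nonempty ∧ (ZSet S b).Finite := by
  have hinj := h.liftsDivisors_inclusion.associatesMap_injective (Submonoid.inclusion_injective _)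
  have hb := hN (Submonoid.inclusion h.le b)
  rwa [← h.image_zSet, Set.image_nonempty,
    Set.finite_image_iff (Multiset.map_injective hinj).injOn] at hb

end Submonoids

/-- Main theorem: finite factorization is detected by undermonoids.  Every submonoid
of `M` is an FFM if and only if every undermonoid of `M` is an FFM. -/
theorem ffm_detected_by_undermonoids (M : Type*) [CancelCommMonoid M] :
    (∀ S : Submonoid M, IsFFM S) ↔ (∀ N : Submonoid M, IsUndermonoid N → IsFFM N) := by
  refine ⟨fun h N _ => h N, fun h S b => ?_⟩
  by_cases hb : IsUnit b
  · rw [zSet_eq_singleton_zero_of_isUnit hb]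
    exact ⟨Set.singleton_nonempty 0, Set.finite_singleton 0⟩
  · obtain ⟨N, hN⟩ := exists_maximal_preservesDivisors S (b : M)
    exact hN.prop.zSet_nonempty_and_finite
      (h N (isUndermonoid_of_maximal_preservesDivisors hb hN))
end

section
/- Let M be a cancellative commutative monoid that is not a group, let b ∈ M, put I = {m ∈ M | ¬ (m ∣ b)}, and let N be a submonoid of M with b ∈ N. Then W = N ∪ I is a submonoid of M; an element w ∈ W is a unit of ↥W if and only if w ∈ N and w is a unit of ↥N; and W is an undermonoid of M. -/
/-- `u` is a unit of the submonoid `S`: some `v ∈ S` has `u * v = 1`. -/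
def IsUnitIn {M : Type*} [CancelCommMonoid M] (S : Submonoid M) (u : M) : Prop :=
  ∃ v ∈ S, u * v = 1

/-!
The non-divisors of `b` form a semigroup ideal `I`. It is proper because `1 ∣ b`, and nonempty
because cancellation turns `b * x ∣ b` into `x ∣ 1`, which fails for a non-unit `x`. Adjoining any
proper ideal to `N` adds no units, since an ideal containing a unit contains `1`; and any `x` in a
nonempty ideal shows that the result is an undermonoid, since `m * x` is again in the ideal.
-/

theorem notMem_semigroupIdeal_of_isUnit {M : Type*} [Monoid M] {I : SemigroupIdeal M}
    (hI : 1 ∉ I) {u : M} (hu : IsUnit u) : u ∉ I := by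
  obtain ⟨v, hvu⟩ := hu.exists_left_inv
  exact fun huI ↦ hI (hvu ▸ I.mul_mem v huI)

/-- The semigroup ideal of the elements of `M` that do not divide `b`. -/
def nonDivisors {M : Type*} [CommSemigroup M] (b : M) : SemigroupIdeal M where
  carrier := {m | ¬ m ∣ b}
  smul_mem' _ _ hm := fun h ↦ hm (dvd_of_mul_left_dvd h)

section CommMonoid

variable {M : Type*} [CommMonoid M]

theorem one_notMem_nonDivisors (b : M) : 1 ∉ nonDivisors b :=
  fun h ↦ h (one_dvd b)

/-- The submonoid `N ∪ I` obtained from a submonoid `N` by adjoining a semigroup ideal `I`. -/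
def adjoinIdeal (N : Submonoid M) (I : SemigroupIdeal M) : Submonoid M where
  carrier := N ∪ I
  one_mem' := Or.inl N.one_mem
  mul_mem' := by
    rintro x y (hxN | hxI) (hyN | hyI)
    · exact Or.inl (N.mul_mem hxN hyN)
    · exact Or.inr (I.mul_mem x hyI)
    · exact Or.inr (mul_comm x y ▸ I.mul_mem y hxI)
    · exact Or.inr (I.mul_mem x hyI)

theorem mem_adjoinIdeal_iff_of_isUnit (N : Submonoid M) {I : SemigroupIdeal M} (hI : 1 ∉ I)
    {u : M} (hu : IsUnit u) : u ∈ adjoinIdeal N I ↔ u ∈ N :=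
  or_iff_left (notMem_semigroupIdeal_of_isUnit hI hu)

end CommMonoid

section CancelCommMonoid

variable {M : Type*} [CancelCommMonoid M]

theorem mul_mem_nonDivisors_of_not_isUnit (b : M) {x : M} (hx : ¬ IsUnit x) :
    b * x ∈ nonDivisors b := by
  rintro ⟨c, hc⟩
  have hxc : x * c = 1 := by rwa [mul_assoc, left_eq_mul] at hc
  exact hx (.of_mul_eq_one c hxc)

theorem isUnitIn_adjoinIdeal_iff (N : Submonoid M) {I : SemigroupIdeal M} (hI : 1 ∉ I) {w : M} :
    IsUnitIn (adjoinIdeal N I) w ↔ IsUnitIn N w :=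
  exists_congr fun _ ↦ and_congr_left fun hwv ↦
    mem_adjoinIdeal_iff_of_isUnit N hI (.of_mul_eq_one_right w hwv)

theorem isUndermonoid_adjoinIdeal (N : Submonoid M) {I : SemigroupIdeal M}
    (hI : (I : Set M).Nonempty) : IsUndermonoid (adjoinIdeal N I) := by
  obtain ⟨x, hx⟩ := hI
  exact fun m ↦ ⟨x, Or.inr hx, m * x, Or.inr (I.mul_mem m hx), rfl⟩

theorem nonGroup_enlargement_general (N : Submonoid M) (I : SemigroupIdeal M)
    (hI_nonempty : (I : Set M).Nonempty) (hI_proper : 1 ∉ I) :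
    ∃ W : Submonoid M,
      (W : Set M) = (N : Set M) ∪ I ∧
      (∀ w ∈ W, (IsUnitIn W w ↔ w ∈ N ∧ IsUnitIn N w)) ∧
      IsUndermonoid W := by
  refine ⟨adjoinIdeal N I, rfl, fun w hw ↦ ?_, isUndermonoid_adjoinIdeal N hI_nonempty⟩
  rw [isUnitIn_adjoinIdeal_iff N hI_proper, iff_and_self]
  rintro ⟨v, -, hwv⟩
  exact (mem_adjoinIdeal_iff_of_isUnit N hI_proper (.of_mul_eq_one v hwv)).mp hw

end CancelCommMonoid

/-- The non-group enlargement: if `M` is not a group, `b ∈ N`, and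
`I = {m | ¬ m ∣ b}`, then `W = N ∪ I` is a submonoid of `M`, an element of `W` is a
unit of `↥W` iff it lies in `N` and is a unit of `↥N`, and `W` is an undermonoid. -/
theorem nonGroup_enlargement (M : Type*) [CancelCommMonoid M]
    (hng : ∃ x : M, ¬ IsUnit x) (b : M) (N : Submonoid M) (hb : b ∈ N) :
    ∃ W : Submonoid M,
      (W : Set M) = (N : Set M) ∪ {m : M | ¬ m ∣ b} ∧
      (∀ w ∈ W, (IsUnitIn W w ↔ w ∈ N ∧ IsUnitIn N w)) ∧
      IsUndermonoid W := by
  obtain ⟨x, hx⟩ := hng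
  exact nonGroup_enlargement_general N (nonDivisors b)
    ⟨b * x, mul_mem_nonDivisors_of_not_isUnit b hx⟩ (one_notMem_nonDivisors b)
end

section
/- Let M be a cancellative commutative monoid that is not a group, let N be a submonoid of M, let b ∈ N, ℓ ∈ ℕ, and Ω ⊆ Z_{N,ℓ}(b). Let W = N ∪ {m ∈ M | ¬ (m ∣ b)}. Then W is Ω-admissible over N: W is unit-reflecting over N, and for every a ∈ N whose class in Associates ↥N occurs in some multiset z ∈ Ω, the class of a in Associates ↥W is irreducible. -/
/-- The set of length-`ℓ` factorizations of `b` in `S`. -/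
def ZSetLen {M : Type*} [CancelCommMonoid M] (S : Submonoid M) (b : S) (ℓ : ℕ) :
    Set (Multiset (Associates S)) :=
  {z ∈ ZSet S b | Multiset.card z = ℓ}

/-- `S` is unit-reflecting over `N`. -/
def UnitReflecting {M : Type*} [CancelCommMonoid M] (N S : Submonoid M) : Prop :=
  ∀ u ∈ S, IsUnitIn S u → ∀ x ∈ N, ∀ y ∈ N, u * y = x → u ∈ N ∧ IsUnitIn N u

/-- `S` is `Ω`-admissible over `N`. -/
def OmegaAdmissible {M : Type*} [CancelCommMonoid M] (N S : Submonoid M)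
    (Ω : Set (Multiset (Associates N))) : Prop :=
  N ≤ S ∧ UnitReflecting N S ∧
    ∀ (a : M) (haN : a ∈ N) (haS : a ∈ S),
      (∃ z ∈ Ω, Associates.mk (⟨a, haN⟩ : N) ∈ z) →
        Irreducible (Associates.mk (⟨a, haS⟩ : S))

/-!
The enlargement adds to `N` no divisor of `b`. Units divide `b`, so it has no new units; a factor of
an atom occurring in a factorization of `b` divides `b`, so such an atom gets no new factorizations.
-/

theorem irreducible_associatesMk_iff {A : Type*} [CommMonoid A] {a : A} :
    Irreducible (Associates.mk a) ↔ Irreducible a := by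
  simp only [irreducible_iff, Associates.isUnit_mk, Associates.forall_associated,
    Associates.mk_mul_mk, Associates.mk_eq_mk_iff_associated]
  refine and_congr_right fun _ ↦ ⟨fun h x y hxy ↦ h x y (.of_eq hxy), fun h x y hxy ↦ ?_⟩
  obtain ⟨u, hu⟩ := hxy.symm
  simpa only [Units.isUnit_mul_units] using h (hu.symm.trans (mul_assoc x y u))

theorem irreducible_inclusion_of_forall_dvd_mem {M : Type*} [CommMonoid M] {N S : Submonoid M}
    (hNS : N ≤ S) {a : N} (ha : Irreducible a) (hdvd : ∀ m ∈ S, m ∣ (a : M) → m ∈ N) :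
    Irreducible (Submonoid.inclusion hNS a) where
  not_isUnit hunit := by
    obtain ⟨v, hav⟩ := hunit.exists_right_inv
    have hav' : (a : M) * v = 1 := congrArg Subtype.val hav
    have hvN : (v : M) ∈ N := hdvd v v.2 (IsUnit.of_mul_eq_one_right _ hav').dvd
    exact ha.not_isUnit (.of_mul_eq_one ⟨v, hvN⟩ (Subtype.ext hav'))
  isUnit_or_isUnit x y hxy := by
    have hxy' : (a : M) = x * y := congrArg Subtype.val hxy
    have hxN : (x : M) ∈ N := hdvd x x.2 (Dvd.intro _ hxy'.symm)
    have hyN : (y : M) ∈ N := hdvd y y.2 (Dvd.intro_left _ hxy'.symm)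
    have hunit : IsUnit (⟨x, hxN⟩ : N) ∨ IsUnit (⟨y, hyN⟩ : N) :=
      ha.isUnit_or_isUnit (Subtype.ext hxy')
    exact hunit.imp (·.map (Submonoid.inclusion hNS)) (·.map (Submonoid.inclusion hNS))

section

variable {M : Type*} [CancelCommMonoid M] {N S : Submonoid M}

theorem unitReflecting_of_forall_isUnit_mem (hunits : ∀ u ∈ S, IsUnit u → u ∈ N) :
    UnitReflecting N S := by
  rintro u huS ⟨v, hvS, huv⟩ - - - - -
  have huN : u ∈ N := hunits u huS (.of_mul_eq_one v huv)
  have hvN : v ∈ N := hunits v hvS (.of_mul_eq_one_right u huv)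
  exact ⟨huN, v, hvN, huv⟩

theorem irreducible_of_mk_mem_of_mem_ZSet {a b : S} {z : Multiset (Associates S)}
    (hz : z ∈ ZSet S b) (ha : Associates.mk a ∈ z) : Irreducible a :=
  irreducible_associatesMk_iff.1 (hz.1 _ ha)

theorem dvd_of_mk_mem_of_mem_ZSet {a b : S} {z : Multiset (Associates S)}
    (hz : z ∈ ZSet S b) (ha : Associates.mk a ∈ z) : a ∣ b :=
  Associates.mk_dvd_mk.1 (hz.2 ▸ Multiset.dvd_prod ha)

theorem nonGroup_omegaAdmissible_general {b : M} (hb : b ∈ N)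
    {Ω : Set (Multiset (Associates N))} (hΩ : Ω ⊆ ZSet N ⟨b, hb⟩) (hNS : N ≤ S)
    (hS : (S : Set M) ⊆ (N : Set M) ∪ {m : M | ¬ m ∣ b}) :
    OmegaAdmissible N S Ω := by
  have mem_of_dvd (m : M) (hm : m ∈ S) (hmb : m ∣ b) : m ∈ N :=
    (hS hm).resolve_right (not_not_intro hmb)
  refine ⟨hNS, unitReflecting_of_forall_isUnit_mem fun u hu hunit ↦ mem_of_dvd u hu hunit.dvd, ?_⟩
  rintro a haN haS ⟨z, hz, haz⟩
  have hirr : Irreducible (⟨a, haN⟩ : N) := irreducible_of_mk_mem_of_mem_ZSet (hΩ hz) haz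
  have hab : a ∣ b := map_dvd N.subtype (dvd_of_mk_mem_of_mem_ZSet (hΩ hz) haz)
  exact irreducible_associatesMk_iff.2 <| irreducible_inclusion_of_forall_dvd_mem hNS hirr
    fun m hm hma ↦ mem_of_dvd m hm (hma.trans hab)

end

/-- Preservation of fixed atoms in the non-group case: for `M` not a group,
`b ∈ N`, and `Ω ⊆ Z_{N,ℓ}(b)`, the enlargement `W` with underlying set
`N ∪ {m | ¬ m ∣ b}` is `Ω`-admissible over `N`. -/
theorem nonGroup_omegaAdmissible (M : Type*) [CancelCommMonoid M]
    (hng : ∃ x : M, ¬ IsUnit x) (N : Submonoid M) (b : M) (hb : b ∈ N) (ℓ : ℕ)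
    (Ω : Set (Multiset (Associates N))) (hΩ : Ω ⊆ ZSetLen N ⟨b, hb⟩ ℓ)
    (W : Submonoid M) (hW : (W : Set M) = (N : Set M) ∪ {m : M | ¬ m ∣ b}) :
    OmegaAdmissible N W Ω :=
  nonGroup_omegaAdmissible_general hb (fun _ hz ↦ (hΩ hz).1)
    (fun _ hm ↦ hW.ge (Or.inl hm)) hW.le
end

section
/- Let H = {0} ∪ {q : ℚ | 1 ≤ q} be an additive submonoid of ℚ. Then: (a) an element a ∈ H is an atom of H (i.e., a ≠ 0 and a is not the sum of two nonzero elements of H) if and only if 1 ≤ a < 2; (b) the set of multisets s of rationals such that s.card = 2, every element of s is an atom of H, and s.sum = 3, is infinite. Consequently H is not a finite factorization monoid. -/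
/-- The underlying set of the additive monoid `H = {0} ∪ ℚ_{≥1}`. -/
def HSet : Set ℚ := {0} ∪ {q : ℚ | 1 ≤ q}

/-- `a` is an atom of `H`: a nonzero element of `H` that is not the sum of two
nonzero elements of `H`. -/
def IsAtomH (a : ℚ) : Prop :=
  a ∈ HSet ∧ a ≠ 0 ∧ ¬ ∃ x ∈ HSet, ∃ y ∈ HSet, x ≠ 0 ∧ y ≠ 0 ∧ a = x + y

/-- The set of factorizations of `b` in `H`: multisets of atoms of `H` summing
to `b`. -/
def FactH (b : ℚ) : Set (Multiset ℚ) :=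
  {s | (∀ x ∈ s, IsAtomH x) ∧ s.sum = b}

/-- `H` is a finite factorization monoid: every element of `H` has a nonempty
finite set of factorizations into atoms. -/
def HIsFFM : Prop := ∀ b ∈ HSet, (FactH b).Nonempty ∧ (FactH b).Finite

-- The entry `q` is recovered as the minimum of the pair.
theorem injOn_pair_of_le {α : Type*} [PartialOrder α] (f : α → α) :
    Set.InjOn (fun q => ({q, f q} : Multiset α)) {q | q ≤ f q} := by
  have le_of_pair_eq {p q : α} (hq : q ≤ f q) (h : ({q, f q} : Multiset α) = {p, f p}) :
      q ≤ p := by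
    have hp : p ∈ ({q, f q} : Multiset α) := by simp [h]
    obtain rfl | rfl : p = q ∨ p = f q := by simpa using hp
    exacts [le_rfl, hq]
  exact fun q hq p hp h => le_antisymm (le_of_pair_eq hq h) (le_of_pair_eq hp h.symm)

theorem mem_hSet_and_ne_zero_iff_one_le {a : ℚ} : a ∈ HSet ∧ a ≠ 0 ↔ 1 ≤ a := by
  constructor
  · rintro ⟨rfl | one_le, ne_zero⟩
    exacts [absurd rfl ne_zero, one_le]
  · exact fun one_le => ⟨Or.inr one_le, (zero_lt_one.trans_le one_le).ne'⟩

theorem exists_mem_hSet_ne_zero_eq_add_iff_two_le {a : ℚ} :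
    (∃ x ∈ HSet, ∃ y ∈ HSet, x ≠ 0 ∧ y ≠ 0 ∧ a = x + y) ↔ 2 ≤ a := by
  constructor
  · rintro ⟨x, hx, y, hy, hx0, hy0, rfl⟩
    have one_le_x : 1 ≤ x := mem_hSet_and_ne_zero_iff_one_le.1 ⟨hx, hx0⟩
    have one_le_y : 1 ≤ y := mem_hSet_and_ne_zero_iff_one_le.1 ⟨hy, hy0⟩
    linarith
  · intro two_le
    obtain ⟨h1, h1_ne⟩ := mem_hSet_and_ne_zero_iff_one_le.2 (le_refl (1 : ℚ))
    obtain ⟨hsub, hsub_ne⟩ := mem_hSet_and_ne_zero_iff_one_le.2 (show 1 ≤ a - 1 by linarith)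
    exact ⟨1, h1, a - 1, hsub, h1_ne, hsub_ne, by ring⟩

theorem isAtomH_iff {a : ℚ} : IsAtomH a ↔ 1 ≤ a ∧ a < 2 := by
  rw [IsAtomH, ← and_assoc, mem_hSet_and_ne_zero_iff_one_le,
    exists_mem_hSet_ne_zero_eq_add_iff_two_le, not_le]

theorem pair_sub_mem_factH {b q : ℚ} (hq : IsAtomH q) (hbq : IsAtomH (b - q)) :
    ({q, b - q} : Multiset ℚ) ∈ FactH b :=
  ⟨by simp [hq, hbq], by simp⟩

theorem infinite_factH_card_eq_two {b : ℚ} (two_lt : 2 < b) (lt_four : b < 4) :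
    {s : Multiset ℚ | Multiset.card s = 2 ∧ s ∈ FactH b}.Infinite := by
  -- For `q` in this interval both `q` and `b - q` lie in `[1, 2)`, and `q < b - q`.
  have interval_infinite : (Set.Ioo (max 1 (b - 2)) (b / 2)).Infinite :=
    Set.Ioo_infinite (max_lt (by linarith) (by linarith))
  refine Set.infinite_of_injOn_mapsTo (f := fun q => ({q, b - q} : Multiset ℚ))
    ((injOn_pair_of_le (b - ·)).mono ?_) ?_ interval_infinite
  · rintro q ⟨-, lt_half⟩
    change q ≤ b - q
    linarith
  · rintro q ⟨max_lt_q, lt_half⟩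
    obtain ⟨one_lt, sub_two_lt⟩ := max_lt_iff.1 max_lt_q
    have atom_q : IsAtomH q := isAtomH_iff.2 ⟨by linarith, by linarith⟩
    have atom_sub : IsAtomH (b - q) := isAtomH_iff.2 ⟨by linarith, by linarith⟩
    exact ⟨Multiset.card_pair q (b - q), pair_sub_mem_factH atom_q atom_sub⟩

/-- In `H = {0} ∪ ℚ_{≥1}`: (a) an element `a ∈ H` is an atom iff `1 ≤ a < 2`;
(b) the set of length-two multisets of atoms summing to `3` is infinite.
Consequently `H` is not a finite factorization monoid. -/
theorem H_fixed_length_obstruction :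
    (∀ a ∈ HSet, (IsAtomH a ↔ 1 ≤ a ∧ a < 2)) ∧
    {s : Multiset ℚ | Multiset.card s = 2 ∧ (∀ x ∈ s, IsAtomH x) ∧ s.sum = 3}.Infinite ∧
    ¬ HIsFFM := by
  have infinite_pairs := infinite_factH_card_eq_two (b := 3) (by norm_num) (by norm_num)
  have three_mem : (3 : ℚ) ∈ HSet := (mem_hSet_and_ne_zero_iff_one_le.2 (by norm_num)).1
  refine ⟨fun _ _ => isAtomH_iff, infinite_pairs, fun ffm => ?_⟩
  exact infinite_pairs ((ffm 3 three_mem).2.subset fun _ hs => hs.2)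
end
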